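/- arXiv:1512.07553 — 3 statements merged into one kernel-verified Lean document; each statement's English description precedes it below -/
import Mathlib

section
/- Let Φ ∈ L¹(ℝ) be nonnegative and suppose there exists C₀ > 0 such that ∫_{|t| ≥ R} Φ(t) dt ≤ C₀/R for all R ≥ 1. Then there exists a constant C > 0 such that for every real-valued Schwartz function f on ℝ one has ∬_{ℝ²} |f(x) − f(y)|² Φ(x − y) dx dy ≤ C ∫_ℝ |ξ| |f̂(ξ)|² dξ, where f̂(ξ) = ∫_ℝ f(x) e^{−2πi x ξ} dx is the Fourier transform of f. -/
open MeasureTheory FourierTransform Set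

/-- A measure with tails `O(1/s)` has truncated second moments of linear growth. -/
theorem lintegral_min_abs_sq_le (μ : Measure ℝ) {K : ℝ} (hK : 0 ≤ K)
    (hμ : ∀ s > 0, μ {t | s ≤ |t|} ≤ ENNReal.ofReal (K / s)) {R : ℝ} (hR : 0 ≤ R) :
    ∫⁻ t, ENNReal.ofReal (min |t| R ^ 2) ∂μ ≤ ENNReal.ofReal (2 * K * R) := by
  have hlayer := lintegral_rpow_eq_lintegral_meas_le_mul μ (f := fun t : ℝ => min |t| R)
    (.of_forall fun t => le_min (abs_nonneg t) hR) (by fun_prop) (p := 2) (by norm_num)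
  simp only [Real.rpow_two] at hlayer
  rw [hlayer]
  have hbound : ∫⁻ s in Ioi (0 : ℝ), μ {t | s ≤ min |t| R} * ENNReal.ofReal (s ^ ((2 : ℝ) - 1))
      ≤ ∫⁻ s in Ioi (0 : ℝ), (Iic R).indicator (fun _ => ENNReal.ofReal K) s := by
    refine setLIntegral_mono' measurableSet_Ioi fun s (hs : 0 < s) => ?_
    by_cases hsR : s ≤ R
    · rw [indicator_of_mem (show s ∈ Iic R from hsR)]
      calc _ ≤ ENNReal.ofReal (K / s) * ENNReal.ofReal (s ^ ((2 : ℝ) - 1)) := by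
            gcongr
            refine (measure_mono fun t ht => ?_).trans (hμ s hs)
            exact (le_min_iff.1 (mem_ofPred_eq ▸ ht)).1
        _ = ENNReal.ofReal K := by
            rw [← ENNReal.ofReal_mul (by positivity)]
            norm_num
            rw [div_mul_cancel₀ _ hs.ne']
    · have hempty : {t : ℝ | s ≤ min |t| R} = ∅ := by
        ext t
        simp [hsR]
      rw [hempty, measure_empty, zero_mul]
      exact zero_le
  refine (mul_le_mul_right hbound _).trans_eq ?_
  rw [lintegral_indicator measurableSet_Iic, Measure.restrict_restrict measurableSet_Iic,
    Iic_inter_Ioi, setLIntegral_const, Real.volume_Ioc, sub_zero,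
    ← ENNReal.ofReal_mul hK, ← ENNReal.ofReal_mul (by norm_num), mul_assoc]

theorem norm_fourierChar_sub_one_le (x : ℝ) : ‖(𝐞 x : ℂ) - 1‖ ≤ 2 * Real.pi * min |x| 1 := by
  have hlin : ‖(𝐞 x : ℂ) - 1‖ ≤ 2 * Real.pi * |x| := by
    have := Real.norm_exp_I_mul_ofReal_sub_one_le (x := 2 * Real.pi * x)
    rw [Real.fourierChar_apply, mul_comm _ Complex.I]
    refine this.trans_eq ?_
    rw [Real.norm_eq_abs, abs_mul, abs_of_pos Real.two_pi_pos]
  have htriv : ‖(𝐞 x : ℂ) - 1‖ ≤ 2 * Real.pi * 1 := by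
    have := norm_sub_le (𝐞 x : ℂ) 1
    rw [Circle.norm_coe, norm_one] at this
    linarith [Real.pi_gt_three]
  rw [mul_min_of_nonneg _ _ Real.two_pi_pos.le]
  exact le_min hlin htriv

/-- The Fourier symbol of the nonlocal quadratic form attached to a measure with tails `O(1/s)`
is `O(|ξ|)`. -/
theorem lintegral_norm_fourierChar_sub_one_sq_le (μ : Measure ℝ) {K : ℝ} (hK : 0 ≤ K)
    (hμ : ∀ s > 0, μ {t | s ≤ |t|} ≤ ENNReal.ofReal (K / s)) (ξ : ℝ) :
    ∫⁻ t, ENNReal.ofReal (‖(𝐞 (t * ξ) : ℂ) - 1‖ ^ 2) ∂μ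
      ≤ ENNReal.ofReal (8 * Real.pi ^ 2 * K * |ξ|) := by
  rcases eq_or_ne ξ 0 with rfl | hξ
  · simp
  have hξ' : 0 < |ξ| := abs_pos.2 hξ
  calc _ ≤ ∫⁻ t, ENNReal.ofReal ((2 * Real.pi * |ξ|) ^ 2) *
          ENNReal.ofReal (min |t| |ξ|⁻¹ ^ 2) ∂μ := by
        refine lintegral_mono fun t => ?_
        rw [← ENNReal.ofReal_mul (by positivity), ← mul_pow]
        refine ENNReal.ofReal_le_ofReal (pow_le_pow_left₀ (norm_nonneg _) ?_ 2)
        refine (norm_fourierChar_sub_one_le _).trans_eq ?_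
        rw [mul_assoc (2 * Real.pi), mul_min_of_nonneg _ _ hξ'.le, mul_inv_cancel₀ hξ'.ne',
          abs_mul, mul_comm |t|]
    _ ≤ ENNReal.ofReal ((2 * Real.pi * |ξ|) ^ 2) * ENNReal.ofReal (2 * K * |ξ|⁻¹) := by
        rw [lintegral_const_mul _ (by fun_prop)]
        gcongr
        exact lintegral_min_abs_sq_le μ hK hμ (by positivity)
    _ = _ := by
        rw [← ENNReal.ofReal_mul (by positivity)]
        congr 1
        field_simp
        ring

theorem SchwartzMap.integrable_norm_sq (f : SchwartzMap ℝ ℂ) :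
    Integrable fun x => ‖f x‖ ^ 2 :=
  (f.memLp 2).integrable_norm_pow (by norm_num)

theorem SchwartzMap.integrable_abs_mul_norm_sq (f : SchwartzMap ℝ ℂ) :
    Integrable fun x => |x| * ‖f x‖ ^ 2 := by
  have hbdd := (f.integrable_pow_mul volume 1).mul_bdd (c := SchwartzMap.seminorm ℝ 0 0 f)
    f.continuous.norm.aestronglyMeasurable (.of_forall fun x => by
      simpa using norm_le_seminorm ℝ f x)
  simpa only [pow_one, Real.norm_eq_abs, mul_assoc, ← sq] using hbdd

theorem SchwartzMap.fourier_comp_add_const (f : SchwartzMap ℝ ℂ) (t ξ : ℝ) :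
    𝓕 (compSubConstCLM ℂ (-t) f) ξ = (𝐞 (t * ξ) : ℂ) * 𝓕 f ξ := by
  have hcomp : ⇑(compSubConstCLM ℂ (-t) f) = f ∘ fun x => x + t := by
    ext x
    simp
  have h := congrFun (VectorFourier.fourierIntegral_comp_add_right 𝐞 volume (innerₗ ℝ) f t) ξ
  rw [← hcomp, innerₗ_apply_apply, real_inner_comm, RCLike.inner_apply, conj_trivial] at h
  exact h

/-- Plancherel's theorem for the increment of a Schwartz function. -/
theorem SchwartzMap.lintegral_norm_sub_sq_eq (f : SchwartzMap ℝ ℂ) (t : ℝ) :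
    ∫⁻ y, ENNReal.ofReal (‖f (y + t) - f y‖ ^ 2)
      = ∫⁻ ξ, ENNReal.ofReal (‖(𝐞 (t * ξ) : ℂ) - 1‖ ^ 2) * ENNReal.ofReal (‖𝓕 f ξ‖ ^ 2) := by
  set g : SchwartzMap ℝ ℂ := compSubConstCLM ℂ (-t) f - f with hg
  have hFg (ξ : ℝ) : 𝓕 g ξ = ((𝐞 (t * ξ) : ℂ) - 1) * 𝓕 f ξ := by
    have hsub : 𝓕 g = 𝓕 (compSubConstCLM ℂ (-t) f) - 𝓕 f :=
      map_sub (fourierCLM ℂ (SchwartzMap ℝ ℂ)) _ _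
    rw [hsub, sub_apply, fourier_comp_add_const]
    ring
  have hplancherel : ∫⁻ y, ENNReal.ofReal (‖g y‖ ^ 2) = ∫⁻ ξ, ENNReal.ofReal (‖𝓕 g ξ‖ ^ 2) := by
    rw [← ofReal_integral_eq_lintegral_ofReal g.integrable_norm_sq
        (.of_forall fun _ => by positivity),
      ← ofReal_integral_eq_lintegral_ofReal (𝓕 g).integrable_norm_sq
        (.of_forall fun _ => by positivity), g.integral_norm_sq_fourier]
  simp only [hFg, norm_mul, mul_pow, ENNReal.ofReal_mul (sq_nonneg ‖_‖)] at hplancherel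
  simpa only [hg, sub_apply,
    compSubConstCLM_apply, sub_neg_eq_add] using hplancherel

theorem SchwartzMap.lintegral_lintegral_norm_sub_sq_le (μ : Measure ℝ) [SFinite μ]
    {K : ℝ} (hK : 0 ≤ K) (hμ : ∀ s > 0, μ {t | s ≤ |t|} ≤ ENNReal.ofReal (K / s))
    (f : SchwartzMap ℝ ℂ) :
    ∫⁻ t, (∫⁻ y, ENNReal.ofReal (‖f (y + t) - f y‖ ^ 2)) ∂μ
      ≤ ENNReal.ofReal (8 * Real.pi ^ 2 * K * ∫ ξ, |ξ| * ‖𝓕 f ξ‖ ^ 2) := by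
  simp_rw [f.lintegral_norm_sub_sq_eq]
  rw [lintegral_lintegral_swap (by fun_prop)]
  calc _ ≤ ∫⁻ ξ, ENNReal.ofReal (8 * Real.pi ^ 2 * K * (|ξ| * ‖𝓕 f ξ‖ ^ 2)) := by
        refine lintegral_mono fun ξ => ?_
        rw [lintegral_mul_const _ (by fun_prop), ← mul_assoc,
          ENNReal.ofReal_mul (by positivity)]
        gcongr
        exact lintegral_norm_fourierChar_sub_one_sq_le μ hK hμ ξ
    _ = _ := by
        rw [← integral_const_mul, ofReal_integral_eq_lintegral_ofReal
          ((𝓕 f).integrable_abs_mul_norm_sq.const_mul _) (.of_forall fun _ => by positivity)]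

theorem withDensity_tail_le {Φ : ℝ → ℝ} (hΦ_int : Integrable Φ) (hΦ_nonneg : ∀ t, 0 ≤ Φ t)
    {C₀ : ℝ} (hΦ_tail : ∀ R ≥ (1 : ℝ), (∫ t in {t : ℝ | R ≤ |t|}, Φ t) ≤ C₀ / R)
    {s : ℝ} (hs : 0 < s) :
    volume.withDensity (fun t => ENNReal.ofReal (Φ t)) {t | s ≤ |t|}
      ≤ ENNReal.ofReal (max C₀ (∫ t, Φ t) / s) := by
  have htail : MeasurableSet {t : ℝ | s ≤ |t|} :=
    measurableSet_le measurable_const measurable_norm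
  rw [withDensity_apply _ htail,
    ← ofReal_integral_eq_lintegral_ofReal hΦ_int.integrableOn (.of_forall hΦ_nonneg)]
  refine ENNReal.ofReal_le_ofReal ?_
  rcases le_total 1 s with h1 | h1
  · exact (hΦ_tail s h1).trans (by gcongr; exact le_max_left _ _)
  · have hnonneg : 0 ≤ ∫ t, Φ t := integral_nonneg hΦ_nonneg
    calc _ ≤ ∫ t, Φ t := setIntegral_le_integral hΦ_int (.of_forall hΦ_nonneg)
      _ ≤ (∫ t, Φ t) / s := le_div_self hnonneg hs h1
      _ ≤ _ := by gcongr; exact le_max_right _ _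

/-- The quadratic form with kernel `Φ (x - y)` as an integral over increments. -/
theorem lintegral_prod_kernel_eq {Φ : ℝ → ℝ} (hΦ : AEMeasurable Φ) {f : ℝ → ℝ}
    (hf : Measurable f) :
    ∫⁻ p : ℝ × ℝ, ENNReal.ofReal ((f p.1 - f p.2) ^ 2 * Φ (p.1 - p.2))
      = ∫⁻ t, (∫⁻ y, ENNReal.ofReal ((f (y + t) - f y) ^ 2))
          ∂volume.withDensity (fun t => ENNReal.ofReal (Φ t)) := by
  have hΦ' : AEMeasurable (fun p : ℝ × ℝ => Φ (p.1 - p.2)) (volume.prod volume) :=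
    hΦ.comp_quasiMeasurePreserving (quasiMeasurePreserving_sub volume volume)
  have hsq : AEMeasurable (fun p : ℝ × ℝ => (f p.1 - f p.2) ^ 2) (volume.prod volume) :=
    Measurable.aemeasurable (by fun_prop)
  rw [Measure.volume_eq_prod, lintegral_prod_symm _ (hsq.fun_mul hΦ').ennreal_ofReal]
  have hshift (y : ℝ) : ∫⁻ x, ENNReal.ofReal ((f x - f y) ^ 2 * Φ (x - y))
      = ∫⁻ t, ENNReal.ofReal ((f (y + t) - f y) ^ 2) * ENNReal.ofReal (Φ t) := by
    rw [← lintegral_add_left_eq_self _ y]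
    simp only [add_sub_cancel_left, ENNReal.ofReal_mul (sq_nonneg _)]
  simp only [hshift]
  have hΦ'' : AEMeasurable (fun p : ℝ × ℝ => Φ p.2) (volume.prod volume) := hΦ.comp_snd
  rw [lintegral_lintegral_swap (by unfold Function.uncurry; fun_prop),
    lintegral_withDensity_eq_lintegral_mul₀ hΦ.ennreal_ofReal]
  · refine lintegral_congr fun t => ?_
    rw [lintegral_mul_const _ (by fun_prop), Pi.mul_apply, mul_comm]
  · exact (Measurable.lintegral_prod_right' (f := fun p : ℝ × ℝ =>
      ENNReal.ofReal ((f (p.2 + p.1) - f p.2) ^ 2)) (by fun_prop)).aemeasurable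

open MeasureTheory FourierTransform in
/-- If `Φ ≥ 0` is integrable with tail bound `∫_{|t| ≥ R} Φ ≤ C₀/R` for `R ≥ 1`, then there
is `C > 0` such that `∬ (f(x)-f(y))² Φ(x-y) dx dy ≤ C ∫ |ξ| |f̂(ξ)|² dξ` for every real
Schwartz function `f`. -/
theorem balanced_rigidity_stmt11
    (Φ : ℝ → ℝ) (hΦ_int : Integrable Φ) (hΦ_nonneg : ∀ t, 0 ≤ Φ t)
    (C₀ : ℝ) (hC₀ : 0 < C₀)
    (hΦ_tail : ∀ R ≥ (1 : ℝ), (∫ t in {t : ℝ | R ≤ |t|}, Φ t) ≤ C₀ / R) :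
    ∃ C > (0 : ℝ), ∀ f : SchwartzMap ℝ ℝ,
      (∫ p : ℝ × ℝ, (f p.1 - f p.2) ^ 2 * Φ (p.1 - p.2))
        ≤ C * ∫ ξ : ℝ, |ξ| * ‖𝓕 (fun x : ℝ => (f x : ℂ)) ξ‖ ^ 2 := by
  set K : ℝ := max C₀ (∫ t, Φ t)
  have hK : 0 < K := hC₀.trans_le (le_max_left _ _)
  refine ⟨8 * Real.pi ^ 2 * K, by positivity, fun f => ?_⟩
  set g : SchwartzMap ℝ ℂ := f.postcompCLM Complex.ofRealCLM with hg
  have hmain := g.lintegral_lintegral_norm_sub_sq_le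
    (volume.withDensity fun t => ENNReal.ofReal (Φ t)) hK.le
    fun s hs => withDensity_tail_le hΦ_int hΦ_nonneg hΦ_tail hs
  have hincr (y t : ℝ) : ‖g (y + t) - g y‖ ^ 2 = (f (y + t) - f y) ^ 2 := by
    simp only [hg, SchwartzMap.postcompCLM_apply, Complex.ofRealCLM_apply]
    rw [← Complex.ofReal_sub, Complex.norm_real, Real.norm_eq_abs, sq_abs]
  simp only [hincr] at hmain
  rw [← lintegral_prod_kernel_eq hΦ_int.aemeasurable f.continuous.measurable] at hmain
  change _ ≤ 8 * Real.pi ^ 2 * K * ∫ ξ : ℝ, |ξ| * ‖𝓕 g ξ‖ ^ 2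
  have hRHS : 0 ≤ 8 * Real.pi ^ 2 * K * ∫ ξ : ℝ, |ξ| * ‖𝓕 g ξ‖ ^ 2 :=
    mul_nonneg (by positivity) (integral_nonneg fun ξ => by positivity)
  by_cases hint : Integrable fun p : ℝ × ℝ => (f p.1 - f p.2) ^ 2 * Φ (p.1 - p.2)
  · rw [← ofReal_integral_eq_lintegral_ofReal hint
      (.of_forall fun p => mul_nonneg (sq_nonneg _) (hΦ_nonneg _))] at hmain
    exact (ENNReal.ofReal_le_ofReal_iff hRHS).1 hmain
  · rwa [integral_undef hint]
end

section
/- Let Φ ∈ L¹(ℝ) be nonnegative and let f be a Schwartz function on ℝ. Then ∬_{ℝ²} |f(x + t) − f(x)|² Φ(t) dx dt = ∫_ℝ |f̂(ξ)|² ( 2 Φ̂(0) − Φ̂(ξ) − Φ̂(−ξ) ) dξ, where f̂(ξ) = ∫_ℝ f(x) e^{−2πi x ξ} dx and Φ̂(ξ) = ∫_ℝ Φ(t) e^{−2πi t ξ} dt. -/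
open MeasureTheory FourierTransform

namespace SchwartzMap

/-- Plancherel's theorem for the difference of a Schwartz function and its translate. -/
theorem integral_norm_sq_comp_add_sub (f : SchwartzMap ℝ ℂ) (t : ℝ) :
    ∫ x, ‖f (x + t) - f x‖ ^ 2 = ∫ ξ, ‖𝓕 (f : ℝ → ℂ) ξ‖ ^ 2 * ‖(𝐞 (t * ξ) : ℂ) - 1‖ ^ 2 := by
  have hg : ∀ x, (f.compSubConstCLM ℂ (-t) - f) x = f (x + t) - f x := by simp
  simp_rw [← hg]
  rw [← integral_norm_sq_fourier]
  congr 1 with ξ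
  have htrans : 𝓕 (f.compSubConstCLM ℂ (-t)) ξ = 𝐞 (t * ξ) * 𝓕 (f : ℝ → ℂ) ξ := by
    have h := congrFun (VectorFourier.fourierIntegral_comp_add_right 𝐞 volume
      (innerₗ ℝ) (f : ℝ → ℂ) t) ξ
    rw [innerₗ_apply_apply, Circle.smul_def, smul_eq_mul, Real.inner_apply] at h
    have hcomp : ((f.compSubConstCLM ℂ (-t) : SchwartzMap ℝ ℂ) : ℝ → ℂ) = f ∘ fun x => x + t := by
      ext x
      simp
    rw [fourier_coe, hcomp]
    exact h
  rw [← fourierCLM_apply (R := ℂ), map_sub, fourierCLM_apply, fourierCLM_apply, sub_apply, htrans, fourier_coe, ← mul_pow, ← norm_mul]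
  congr 2
  ring

/-- The square of the difference of a Schwartz function and its translates, weighted in the
translation parameter by an integrable function, is integrable on the plane. -/
theorem integrable_sq_comp_add_sub_mul (f : SchwartzMap ℝ ℝ) {Φ : ℝ → ℝ} (hΦ : Integrable Φ) :
    Integrable (fun p : ℝ × ℝ => (f (p.1 + p.2) - f p.1) ^ 2 * Φ p.2) := by
  have hf : Integrable (fun x => f x ^ 2) := (f.memLp 2 volume).integrable_sq
  have hprod : Integrable (fun p : ℝ × ℝ => f p.1 ^ 2 * Φ p.2) := hf.mul_prod hΦ
  have hshear : MeasurePreserving (fun p : ℝ × ℝ => (p.1 + p.2, p.2)) := by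
    have h := (measurePreserving_prod_add_swap (volume : Measure ℝ) (volume : Measure ℝ))
    have h' := (Measure.measurePreserving_swap (μ := (volume : Measure ℝ))
      (ν := (volume : Measure ℝ))).comp h
    have hfun : (Prod.swap ∘ fun z : ℝ × ℝ => (z.2, z.2 + z.1)) = fun p => (p.1 + p.2, p.2) := by
      ext p <;> simp [add_comm]
    rwa [hfun] at h'
  have hshift : Integrable (fun p : ℝ × ℝ => f (p.1 + p.2) ^ 2 * Φ p.2) :=
    hshear.integrable_comp_of_integrable hprod
  refine ((hshift.norm.add hprod.norm).const_mul 2).mono' ?_ (.of_forall fun p => ?_)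
  · exact ((by fun_prop : Continuous fun p : ℝ × ℝ =>
      (f (p.1 + p.2) - f p.1) ^ 2).aestronglyMeasurable).mul hΦ.aestronglyMeasurable.comp_snd
  · simp only [Pi.add_apply, norm_mul, norm_pow, Real.norm_eq_abs, sq_abs]
    rw [← add_mul, ← mul_assoc]
    gcongr
    nlinarith [sq_nonneg (f (p.1 + p.2) + f p.1)]

end SchwartzMap

/-- The squared distance from a point of the unit circle to `1`. -/
theorem Circle.norm_coe_sub_one_sq (z : Circle) :
    ((‖(z : ℂ) - 1‖ ^ 2 : ℝ) : ℂ) = 2 - z - (z⁻¹ : Circle) := by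
  rw [← Complex.normSq_eq_norm_sq, Complex.normSq_eq_conj_mul_self, map_sub, map_one,
    ← Circle.coe_inv_eq_conj]
  have h : ((z⁻¹ : Circle) : ℂ) * z = 1 := by rw [← Circle.coe_mul]; simp
  linear_combination h

/-- The symmetrized Fourier multiplier of an integrable function as an integral against the
nonnegative kernel `‖𝐞 (t * ξ) - 1‖ ^ 2`. -/
theorem two_mul_fourier_zero_sub_fourier_sub_fourier_neg {Φ : ℝ → ℝ} (hΦ : Integrable Φ) (ξ : ℝ) :
    2 * 𝓕 (fun t : ℝ => (Φ t : ℂ)) 0 - 𝓕 (fun t : ℝ => (Φ t : ℂ)) ξ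
        - 𝓕 (fun t : ℝ => (Φ t : ℂ)) (-ξ)
      = ((∫ t, ‖(𝐞 (t * ξ) : ℂ) - 1‖ ^ 2 * Φ t : ℝ) : ℂ) := by
  have hint (w : ℝ) : Integrable (fun t : ℝ => 𝐞 (-(t * w)) • (Φ t : ℂ)) := by
    have h := (Real.fourierIntegral_convergent_iff (V := ℝ) w).2 (hΦ.ofReal (𝕜 := ℂ))
    simpa [mul_comm] using h
  rw [← integral_complex_ofReal]
  simp_rw [Real.fourier_real_eq]
  rw [← integral_const_mul, ← integral_sub ((hint 0).const_mul 2) (hint ξ),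
    ← integral_sub (by exact ((hint 0).const_mul 2).sub (hint ξ)) (hint (-ξ))]
  congr 1 with t
  rw [Complex.ofReal_mul, Circle.norm_coe_sub_one_sq, ← AddChar.map_neg_eq_inv]
  simp only [Circle.smul_def, smul_eq_mul, mul_zero, mul_neg, neg_neg, neg_zero,
    AddChar.map_zero_eq_one, Circle.coe_one]
  ring

open MeasureTheory FourierTransform in
/-- For nonnegative integrable `Φ` and Schwartz `f`:
`∬ (f(x+t)-f(x))² Φ(t) dx dt = ∫ |f̂(ξ)|² (2Φ̂(0) - Φ̂(ξ) - Φ̂(-ξ)) dξ`. -/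
theorem balanced_rigidity_stmt12
    (Φ : ℝ → ℝ) (hΦ_int : Integrable Φ) (hΦ_nonneg : ∀ t, 0 ≤ Φ t)
    (f : SchwartzMap ℝ ℝ) :
    ((∫ p : ℝ × ℝ, (f (p.1 + p.2) - f p.1) ^ 2 * Φ p.2 : ℝ) : ℂ)
      = ∫ ξ : ℝ, (‖𝓕 (fun x : ℝ => (f x : ℂ)) ξ‖ ^ 2 : ℂ) *
          (2 * 𝓕 (fun t : ℝ => (Φ t : ℂ)) 0
            - 𝓕 (fun t : ℝ => (Φ t : ℂ)) ξ - 𝓕 (fun t : ℝ => (Φ t : ℂ)) (-ξ)) := by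
  set F : SchwartzMap ℝ ℂ := f.postcompCLM Complex.ofRealCLM
  have hF : (fun x : ℝ => (f x : ℂ)) = F := rfl
  rw [hF]
  have hspace (t : ℝ) : ∫ x, (f (x + t) - f x) ^ 2
      = ∫ ξ, ‖𝓕 (F : ℝ → ℂ) ξ‖ ^ 2 * ‖(𝐞 (t * ξ) : ℂ) - 1‖ ^ 2 := by
    rw [← F.integral_norm_sq_comp_add_sub t]
    congr 1 with x
    simp [← hF, ← Complex.ofReal_sub]
  have hFint : Integrable (fun ξ => ‖𝓕 (F : ℝ → ℂ) ξ‖ ^ 2) :=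
    ((𝓕 F).memLp 2 volume).integrable_norm_pow (by simp)
  have hfreq : Integrable (fun p : ℝ × ℝ =>
      ‖𝓕 (F : ℝ → ℂ) p.2‖ ^ 2 * ‖(𝐞 (p.1 * p.2) : ℂ) - 1‖ ^ 2 * Φ p.1) := by
    have hprod : Integrable (fun p : ℝ × ℝ => Φ p.1 * ‖𝓕 (F : ℝ → ℂ) p.2‖ ^ 2) :=
      hΦ_int.mul_prod hFint
    have hbound := hprod.bdd_mul (c := 4)
      (f := fun p : ℝ × ℝ => ‖(𝐞 (p.1 * p.2) : ℂ) - 1‖ ^ 2) (by fun_prop)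
      (.of_forall fun p => by
        have h : ‖(𝐞 (p.1 * p.2) : ℂ) - 1‖ ≤ 2 := (norm_sub_le _ _).trans (by rw [Circle.norm_coe]; norm_num)
        rw [norm_pow, norm_norm]
        nlinarith [norm_nonneg ((𝐞 (p.1 * p.2) : ℂ) - 1)])
    refine hbound.congr (.of_forall fun p => ?_)
    ring
  have hreal : ∫ p : ℝ × ℝ, (f (p.1 + p.2) - f p.1) ^ 2 * Φ p.2
      = ∫ ξ, ‖𝓕 (F : ℝ → ℂ) ξ‖ ^ 2 * ∫ t, ‖(𝐞 (t * ξ) : ℂ) - 1‖ ^ 2 * Φ t := by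
    rw [Measure.volume_eq_prod, integral_prod_symm _ (f.integrable_sq_comp_add_sub_mul hΦ_int)]
    simp_rw [integral_mul_const, hspace, ← integral_mul_const]
    rw [integral_integral_swap hfreq]
    simp_rw [mul_assoc, integral_const_mul]
  rw [hreal, ← integral_complex_ofReal]
  congr 1 with ξ
  rw [two_mul_fourier_zero_sub_fourier_sub_fourier_neg hΦ_int]
  push_cast
  rfl
end

section
/- For every δ > 0 and every ε > 0 there exists a nonnegative, even, smooth compactly supported function ψ : ℝ → ℝ with support contained in [−δ, δ], such that ∫_ℝ ψ(ξ) dξ = 1 and ∫_ℝ |ξ| ψ(ξ)² dξ ≤ ε. -/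
open MeasureTheory in
/-- If `f ≥ 0` is integrable with `|ξ| f(ξ) ≤ 1`, then normalizing it to
mass one bounds the weighted square integral by the inverse of its mass. -/
lemma integral_abs_mul_sq_normalized_le {f : ℝ → ℝ} (hint : Integrable f)
    (hnn : ∀ ξ, 0 ≤ f ξ) (hbd : ∀ ξ, |ξ| * f ξ ≤ 1)
    (hpos : 0 < ∫ ξ, f ξ) :
    ∫ ξ, |ξ| * ((∫ x, f x)⁻¹ * f ξ) ^ 2 ≤ (∫ ξ, f ξ)⁻¹ := by
  set M := ∫ ξ, f ξ with hM
  calc ∫ ξ, |ξ| * (M⁻¹ * f ξ) ^ 2 ≤ ∫ ξ, (M⁻¹) ^ 2 * f ξ := by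
        refine integral_mono_of_nonneg (.of_forall fun ξ => by positivity)
          (hint.const_mul _) (.of_forall fun ξ => ?_)
        have h := mul_le_mul_of_nonneg_right (hbd ξ) (hnn ξ)
        calc |ξ| * (M⁻¹ * f ξ) ^ 2 = (M⁻¹) ^ 2 * (|ξ| * f ξ * f ξ) := by ring
          _ ≤ (M⁻¹) ^ 2 * (1 * f ξ) := by gcongr
          _ = (M⁻¹) ^ 2 * f ξ := by ring
    _ = M⁻¹ := by
        rw [integral_const_mul, ← hM]
        field_simp

/-- The integral of `1 / (x + r)` over `[0, a]` is at least `L` when `r = a * exp (-L)`. -/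
lemma le_integral_inv_add_mul_exp_neg {a : ℝ} (ha : 0 < a) (L : ℝ) :
    L ≤ ∫ x in (0 : ℝ)..a, (x + a * Real.exp (-L))⁻¹ := by
  have hr : 0 < a * Real.exp (-L) := by positivity
  rw [intervalIntegral.integral_comp_add_right (fun x => x⁻¹), zero_add,
    integral_inv_of_pos hr (by positivity), Real.le_log_iff_exp_le (by positivity),
    le_div_iff₀ hr]
  have h : Real.exp L * (a * Real.exp (-L)) = a := by
    rw [mul_left_comm, ← Real.exp_add]; simp
  linarith

open MeasureTheory in
/-- For every `δ > 0` and `ε > 0` there is a nonnegative, even, smooth compactly supported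
`ψ` with support in `[-δ, δ]`, `∫ ψ = 1` and `∫ |ξ| ψ(ξ)² dξ ≤ ε`. -/
theorem balanced_rigidity_stmt14 (δ : ℝ) (hδ : 0 < δ) (ε : ℝ) (hε : 0 < ε) :
    ∃ ψ : ℝ → ℝ,
      ContDiff ℝ (⊤ : ℕ∞) ψ ∧
      HasCompactSupport ψ ∧
      (∀ ξ, 0 ≤ ψ ξ) ∧
      (∀ ξ, ψ (-ξ) = ψ ξ) ∧
      tsupport ψ ⊆ Set.Icc (-δ) δ ∧
      (∫ ξ : ℝ, ψ ξ) = 1 ∧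
      (∫ ξ : ℝ, |ξ| * ψ ξ ^ 2) ≤ ε := by
  set r : ℝ := δ / 2 * Real.exp (-ε⁻¹) with hr_def
  have hr : 0 < r := by positivity
  let b : ContDiffBump (0 : ℝ) := ⟨δ / 2, δ, by positivity, by linarith⟩
  let f : ℝ → ℝ := fun x => b x * (√(x ^ 2 + r ^ 2))⁻¹
  have hrad (x : ℝ) : 0 < x ^ 2 + r ^ 2 := by positivity
  have hsqrt (x : ℝ) : 0 < √(x ^ 2 + r ^ 2) := Real.sqrt_pos.2 (hrad x)
  have hsmooth : ContDiff ℝ (⊤ : ℕ∞) f :=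
    b.contDiff.mul ((ContDiff.sqrt (by fun_prop) fun x => (hrad x).ne').inv
      fun x => (hsqrt x).ne')
  have hcs : HasCompactSupport f := b.hasCompactSupport.mul_right
  have hnn (x : ℝ) : 0 ≤ f x := mul_nonneg b.nonneg (inv_nonneg.2 (hsqrt x).le)
  have hbd (x : ℝ) : |x| * f x ≤ 1 := by
    have h : |x| ≤ √(x ^ 2 + r ^ 2) := Real.abs_le_sqrt (by nlinarith)
    calc |x| * f x = b x * (|x| / √(x ^ 2 + r ^ 2)) := by simp only [f]; ring
      _ ≤ 1 * 1 := mul_le_mul b.le_one (div_le_one_of_le₀ h (hsqrt x).le) (by positivity) one_pos.le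
      _ = 1 := one_mul 1
  have hint : Integrable f := hsmooth.continuous.integrable_of_hasCompactSupport hcs
  have hlow (x : ℝ) (hx : x ∈ Set.Icc 0 (δ / 2)) : (x + r)⁻¹ ≤ f x := by
    have hb : b x = 1 := b.one_of_mem_closedBall (by
      simpa [b, abs_of_nonneg hx.1] using hx.2)
    have h : √(x ^ 2 + r ^ 2) ≤ x + r :=
      Real.sqrt_le_iff.2 ⟨by linarith [hx.1], by nlinarith [mul_nonneg hx.1 hr.le]⟩
    simpa only [f, hb, one_mul] using inv_anti₀ (hsqrt x) h
  have hmass : ε⁻¹ ≤ ∫ x, f x := by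
    calc ε⁻¹ ≤ ∫ x in (0 : ℝ)..δ / 2, (x + r)⁻¹ :=
          le_integral_inv_add_mul_exp_neg (half_pos hδ) ε⁻¹
      _ ≤ ∫ x in (0 : ℝ)..δ / 2, f x := by
          refine intervalIntegral.integral_mono_on (half_pos hδ).le
            (ContinuousOn.intervalIntegrable ?_) hint.intervalIntegrable hlow
          rw [Set.uIcc_of_le (half_pos hδ).le]
          exact ContinuousOn.inv₀ (by fun_prop) fun x hx => by linarith [hx.1]
      _ ≤ ∫ x, f x := by
          rw [intervalIntegral.integral_of_le (half_pos hδ).le]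
          exact setIntegral_le_integral hint (.of_forall hnn)
  have hpos : 0 < ∫ x, f x := (inv_pos.2 hε).trans_le hmass
  refine ⟨fun x => (∫ y, f y)⁻¹ * f x, contDiff_const.mul hsmooth, hcs.mul_left,
    fun x => mul_nonneg (inv_nonneg.2 hpos.le) (hnn x), fun x => ?_, ?_, ?_, ?_⟩
  · simp only [f, b.neg, neg_sq]
  · have hb : tsupport b = Set.Icc (-δ) δ := by
      rw [b.tsupport_eq, Real.closedBall_eq_Icc, zero_sub, zero_add]
    rw [← hb]
    exact (tsupport_mul_subset_right (f := fun _ => (∫ y, f y)⁻¹)).trans tsupport_mul_subset_left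
  · rw [integral_const_mul, inv_mul_cancel₀ hpos.ne']
  · exact (integral_abs_mul_sq_normalized_le hint hnn hbd hpos).trans
      (inv_le_of_inv_le₀ hε hmass)
end
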